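/- arXiv:2512.22696 — 2 statements merged into one kernel-verified Lean document; each statement's English description precedes it below -/
import Mathlib

section
/- Let a, b, c be positive integers with c² = a² + b² + ab. Then the ideal trapezoid with shorter parallel side a² + b² and lateral sides ab (so with longer parallel side a² + b² + ab = c²) tiles into a² + b² + c² congruent copies of the triangle with side lengths (a, b, c). -/
noncomputable section

abbrev Plane := EuclideanSpace ℝ (Fin 2)

/-- The point (x, y) in the Euclidean plane. -/
def pt (x y : ℝ) : Plane := (WithLp.equiv 2 (Fin 2 → ℝ)).symm ![x, y]

/-- `Δ` is a triangle with side lengths `(p, q, r)`: the convex hull of points `P, Q, R`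
with `dist Q R = p`, `dist P R = q`, `dist P Q = r`. -/
def IsTriangle (p q r : ℝ) (Δ : Set Plane) : Prop :=
  ∃ P Q R : Plane, dist Q R = p ∧ dist P R = q ∧ dist P Q = r ∧
    Δ = convexHull ℝ {P, Q, R}

/-- `S` tiles into `N` congruent copies of the `(p, q, r)` triangle: there are isometries
`f 1, …, f N` of the plane and a triangle `Δ` with side lengths `(p, q, r)` such that
`S` is the union of the `f i '' Δ` and their interiors are pairwise disjoint. -/
def TilesInto (S : Set Plane) (N : ℕ) (p q r : ℝ) : Prop :=
  ∃ (f : Fin N → Plane ≃ᵢ Plane) (Δ : Set Plane),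
    IsTriangle p q r Δ ∧
    S = ⋃ i, f i '' Δ ∧
    ∀ i j : Fin N, i ≠ j → interior (f i '' Δ) ∩ interior (f j '' Δ) = ∅

/-- The ideal trapezoid with shorter parallel side `x` and lateral sides `ℓ`
(longer parallel side `x + ℓ`, base angles `π/3`). -/
def IdealTrapezoid (x ℓ : ℝ) : Set Plane :=
  convexHull ℝ {pt 0 0, pt (x + ℓ) 0, pt (x + ℓ/2) (ℓ * Real.sqrt 3 / 2),
    pt (ℓ/2) (ℓ * Real.sqrt 3 / 2)}

/-!
Let `O E D A` be the trapezoid, with `OE = c²` the longer parallel side, and mark `X` on the shorter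
side `AD` with `AX = a²`, `XD = b²`. Since its base angles are `π/3`, the law of cosines gives
`OX = a * c` and `EX = b * c`, so that `OX` and `EX` cut the trapezoid into the triangles `OXA`,
`OEX` and `EDX`, similar to the `(a, b, c)` triangle with ratios `a`, `c` and `b`. A triangle
scaled by `n` splits along the lattice lines into `n ^ 2` copies of the original.
-/

section ConvexCuts

variable {𝕜 E : Type*} [Field 𝕜] [LinearOrder 𝕜] [IsStrictOrderedRing 𝕜] [AddCommGroup E]
  [Module 𝕜 E]

lemma segment_subset_union_of_mem {x y z : E} (hy : y ∈ segment 𝕜 x z) :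
    segment 𝕜 x z ⊆ segment 𝕜 x y ∪ segment 𝕜 y z := by
  intro w hw
  simp only [Set.mem_union, mem_segment_iff_wbtw] at *
  have hbetween : Wbtw 𝕜 x w y ∨ Wbtw 𝕜 x y w := by
    obtain ⟨s, hs, rfl⟩ := hw
    obtain ⟨t, ht, rfl⟩ := hy
    exact wbtw_or_wbtw_smul_vadd_of_nonneg x (z -ᵥ x) hs.1 ht.1
  exact hbetween.imp_right hw.trans_left_right

lemma convex_setOf_segment_inter_nonempty {C : Set E} (hC : Convex 𝕜 C) (x : E) :
    Convex 𝕜 {y | (segment 𝕜 x y ∩ C).Nonempty} := by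
  rw [convex_iff_segment_subset]
  rintro y ⟨u, huy, hu⟩ z ⟨v, hvz, hv⟩ w hw
  rw [segment_symm] at huy hvz
  -- Pasch's axiom in the triangle `x y z`
  obtain ⟨p, hpC, hpw⟩ :=
    Set.not_disjoint_iff.1 (not_disjoint_segment_convexHull_triple hw huy hvz)
  rw [Set.insert_eq_of_mem (Set.mem_insert x {w}), convexHull_pair] at hpw
  exact ⟨p, hpw, hC.segment_subset hu hv hpC⟩

lemma segment_inter_nonempty_of_mem_convexHull {C S T : Set E} (hC : Convex 𝕜 C)
    (h : ∀ x ∈ S, ∀ y ∈ T, (segment 𝕜 x y ∩ C).Nonempty) {x y : E} (hx : x ∈ convexHull 𝕜 S)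
    (hy : y ∈ convexHull 𝕜 T) : (segment 𝕜 x y ∩ C).Nonempty := by
  have hxT : ∀ b ∈ T, (segment 𝕜 x b ∩ C).Nonempty := fun b hb => by
    rw [segment_symm]
    refine convexHull_min (fun a ha => ?_) (convex_setOf_segment_inter_nonempty hC b) hx
    rw [Set.mem_ofPred_eq, segment_symm]
    exact h a ha b hb
  exact convexHull_min hxT (convex_setOf_segment_inter_nonempty hC x) hy

theorem convexHull_union_eq_union_of_segments_meet {S T W : Set E} (hS : S.Nonempty)
    (hT : T.Nonempty) (hW : W ⊆ convexHull 𝕜 (S ∪ T))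
    (hmeet : ∀ x ∈ S, ∀ y ∈ T, (segment 𝕜 x y ∩ convexHull 𝕜 W).Nonempty) :
    convexHull 𝕜 (S ∪ T) = convexHull 𝕜 (S ∪ W) ∪ convexHull 𝕜 (T ∪ W) := by
  have hST := subset_convexHull 𝕜 (S ∪ T)
  refine Set.Subset.antisymm ?_ (Set.union_subset
    (convexHull_min (Set.union_subset (Set.subset_union_left.trans hST) hW)
      (convex_convexHull 𝕜 _))
    (convexHull_min (Set.union_subset (Set.subset_union_right.trans hST) hW)
      (convex_convexHull 𝕜 _)))
  intro w hw
  rw [convexHull_union hS hT, mem_convexJoin] at hw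
  obtain ⟨x, hx, y, hy, hw⟩ := hw
  obtain ⟨z, hzxy, hz⟩ :=
    segment_inter_nonempty_of_mem_convexHull (convex_convexHull 𝕜 W) hmeet hx hy
  refine (segment_subset_union_of_mem hzxy hw).imp (fun hwxz => ?_) (fun hwzy => ?_)
  · exact (convex_convexHull 𝕜 (S ∪ W)).segment_subset
      (convexHull_mono Set.subset_union_left hx) (convexHull_mono Set.subset_union_right hz) hwxz
  · exact (convex_convexHull 𝕜 (T ∪ W)).segment_subset
      (convexHull_mono Set.subset_union_right hz) (convexHull_mono Set.subset_union_left hy) hwzy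

lemma diagonals_inter_nonempty (P Q w : E) {m n : 𝕜} (hm : 0 ≤ m) (hn : 0 < n) :
    (segment 𝕜 P (Q + m • w) ∩ segment 𝕜 (P + n • w) Q).Nonempty := by
  have hsum : m / (m + n) + n / (m + n) = 1 := by rw [← add_div, div_self (by positivity)]
  refine ⟨(m / (m + n)) • P + (n / (m + n)) • (Q + m • w),
    ⟨_, _, by positivity, by positivity, hsum, rfl⟩,
    ⟨m / (m + n), n / (m + n), by positivity, by positivity, hsum, ?_⟩⟩
  module

end ConvexCuts

lemma interior_inter_interior_eq_empty_of_le_of_ge {E : Type*} [AddCommGroup E] [Module ℝ E]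
    [TopologicalSpace E] [ContinuousAdd E] [ContinuousSMul ℝ E] {S T : Set E}
    {f : E →ₗ[ℝ] ℝ} (hf : f ≠ 0) {c : ℝ}
    (hS : ∀ x ∈ S, f x ≤ c) (hT : ∀ x ∈ T, c ≤ f x) : interior S ∩ interior T = ∅ := by
  obtain ⟨u, hu⟩ := f.surjective hf 1
  refine Set.eq_empty_of_forall_notMem fun x ⟨hxS, hxT⟩ => ?_
  have hcont : Filter.Tendsto (fun ε : ℝ => x + ε • u) (nhds 0) (nhds x) := by
    have hline : Continuous fun ε : ℝ => x + ε • u := by fun_prop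
    simpa using hline.tendsto 0
  have hmem : ∀ᶠ ε in nhdsWithin (0 : ℝ) (Set.Ioi 0), x + ε • u ∈ S ∧ 0 < ε :=
    ((hcont.eventually (mem_interior_iff_mem_nhds.1 hxS)).filter_mono nhdsWithin_le_nhds).and
      self_mem_nhdsWithin
  obtain ⟨ε, hεS, hε⟩ := hmem.exists
  have hle : f x + ε ≤ c := by simpa [hu] using hS _ hεS
  linarith [hT x (interior_subset hxT)]

section Tilings

/-- `S` is the union of `N` isometric copies of the prototile `Δ` with pairwise disjoint interiors:
the relation underlying `TilesInto`, in any metric space and with the prototile fixed. -/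
def IsTiledBy {X : Type*} [PseudoEMetricSpace X] (S Δ : Set X) (N : ℕ) : Prop :=
  ∃ f : Fin N → X ≃ᵢ X, S = ⋃ i, f i '' Δ ∧
    ∀ i j : Fin N, i ≠ j → interior (f i '' Δ) ∩ interior (f j '' Δ) = ∅

namespace IsTiledBy

section Metric

variable {X : Type*} [PseudoEMetricSpace X] {S T Δ : Set X} {N M : ℕ}

lemma image (Δ : Set X) (e : X ≃ᵢ X) : IsTiledBy (e '' Δ) Δ 1 :=
  ⟨fun _ => e, (Set.iUnion_const _).symm, fun i j hij => absurd (Subsingleton.elim i j) hij⟩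

lemma image_image (h : IsTiledBy S Δ N) (e e' : X ≃ᵢ X) :
    IsTiledBy (e '' S) (e' '' Δ) N := by
  obtain ⟨f, rfl, hf⟩ := h
  have himage : ∀ i, (e'.symm.trans (f i)).trans e '' (e' '' Δ) = e '' (f i '' Δ) := fun i => by
    simp [Set.image_image]
  refine ⟨fun i => (e'.symm.trans (f i)).trans e, ?_, fun i j hij => ?_⟩
  · simp only [himage, Set.image_iUnion]
  · simp only [himage]
    rw [← e.coe_toHomeomorph, ← Homeomorph.image_interior, ← Homeomorph.image_interior,
      ← Set.image_inter e.toHomeomorph.injective, hf i j hij, Set.image_empty]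

lemma union (hS : IsTiledBy S Δ N) (hT : IsTiledBy T Δ M)
    (hST : interior S ∩ interior T = ∅) : IsTiledBy (S ∪ T) Δ (N + M) := by
  obtain ⟨f, rfl, hf⟩ := hS
  obtain ⟨g, rfl, hg⟩ := hT
  have hfg : ∀ i j, interior (f i '' Δ) ∩ interior (g j '' Δ) = ∅ := fun i j =>
    Set.subset_empty_iff.1 <| hST ▸ Set.inter_subset_inter
      (interior_mono (Set.subset_iUnion (fun i => f i '' Δ) i))
      (interior_mono (Set.subset_iUnion (fun j => g j '' Δ) j))
  refine ⟨Fin.append f g, ?_, fun i j hij => ?_⟩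
  · rw [← finSumFinEquiv.surjective.iUnion_comp, Set.iUnion_sum]
    simp
  · induction i using Fin.addCases with
    | left i =>
      induction j using Fin.addCases with
      | left j => simpa using hf i j (by rintro rfl; exact hij rfl)
      | right j => simpa using hfg i j
    | right i =>
      induction j using Fin.addCases with
      | left j => simpa [Set.inter_comm] using hfg j i
      | right j => simpa using hg i j (by rintro rfl; exact hij rfl)

end Metric

theorem of_cut {E : Type*} [SeminormedAddCommGroup E] [NormedSpace ℝ E] {S Δ : Set E} {N M : ℕ}
    {f : E →ₗ[ℝ] ℝ} (hf : f ≠ 0) (c : ℝ) (hle : IsTiledBy (S ∩ {x | f x ≤ c}) Δ N)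
    (hge : IsTiledBy (S ∩ {x | c ≤ f x}) Δ M) : IsTiledBy S Δ (N + M) := by
  have hcover : S ∩ {x | f x ≤ c} ∪ S ∩ {x | c ≤ f x} = S := by
    rw [← Set.inter_union_distrib_left]
    exact Set.inter_eq_left.2 fun x _ => le_total (f x) c
  rw [← hcover]
  exact hle.union hge
    (interior_inter_interior_eq_empty_of_le_of_ge hf (fun x hx => hx.2) fun x hx => hx.2)

end IsTiledBy

end Tilings

section Grid

lemma basis_coord_ne_zero {ι R M : Type*} [Semiring R] [Nontrivial R] [AddCommMonoid M]
    [Module R M] (b : Module.Basis ι R M) (i : ι) : b.coord i ≠ 0 := fun h => by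
  simpa using LinearMap.congr_fun h (b i)

variable {E : Type*} [SeminormedAddCommGroup E] [NormedSpace ℝ E] (b : Module.Basis (Fin 2) ℝ E)

/-- The triangle with vertices `0`, `r • b 0` and `r • b 1`, described by inequalities between the
coordinates in the basis `b`. -/
def gridTriangle (r : ℝ) : Set E :=
  {x | 0 ≤ b.coord 0 x ∧ 0 ≤ b.coord 1 x ∧ b.coord 0 x + b.coord 1 x ≤ r}

lemma gridTriangle_eq_convexHull {r : ℝ} (hr : 0 < r) :
    gridTriangle b r = convexHull ℝ {0, r • b 0, r • b 1} := by
  refine Set.Subset.antisymm ?_ (convexHull_min ?_ ?_)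
  · rintro x ⟨h₀, h₁, h₀₁⟩
    have hrepr : b.coord 0 x • b 0 + b.coord 1 x • b 1 = x := by
      simpa only [Fin.sum_univ_two, Module.Basis.coord_apply] using b.sum_repr x
    have hmem := (convex_convexHull ℝ {0, r • b 0, r • b 1}).sum_mem (t := Finset.univ)
      (w := ![1 - (b.coord 0 x + b.coord 1 x) / r, b.coord 0 x / r, b.coord 1 x / r])
      (z := ![0, r • b 0, r • b 1])
      (fun i _ => by
        fin_cases i
        · exact sub_nonneg.2 (div_le_one_of_le₀ h₀₁ hr.le)
        · exact div_nonneg h₀ hr.le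
        · exact div_nonneg h₁ hr.le)
      (by simp only [Fin.sum_univ_three, Matrix.cons_val]; ring)
      (fun i _ => subset_convexHull ℝ _ (by fin_cases i <;> simp))
    rw [← hrepr]
    simpa [Fin.sum_univ_three, smul_smul, hr.ne'] using hmem
  · rintro x (rfl | rfl | rfl) <;> simp [gridTriangle, hr.le]
  · exact (convex_halfSpace_ge (b.coord 0).isLinear 0).inter
      ((convex_halfSpace_ge (b.coord 1).isLinear 0).inter
        (convex_halfSpace_le (b.coord 0 + b.coord 1).isLinear r))

lemma isTiledBy_gridTriangle_upward (p q : ℝ) :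
    IsTiledBy {x | p ≤ b.coord 0 x ∧ q ≤ b.coord 1 x ∧ b.coord 0 x + b.coord 1 x ≤ p + q + 1}
      (gridTriangle b 1) 1 := by
  have hp : b.coord 0 (p • b 0 + q • b 1) = p := by simp
  have hq : b.coord 1 (p • b 0 + q • b 1) = q := by simp
  convert! IsTiledBy.image (gridTriangle b 1) (IsometryEquiv.addRight (p • b 0 + q • b 1)) using 1
  ext x
  rw [← IsometryEquiv.preimage_symm, IsometryEquiv.addRight_symm]
  simp only [gridTriangle, IsometryEquiv.addRight_apply, Set.mem_preimage, Set.mem_ofPred_eq,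
    map_add (b.coord _) x, map_neg, hp, hq]
  grind

lemma isTiledBy_gridTriangle_downward (p q : ℝ) :
    IsTiledBy {x | b.coord 0 x ≤ p ∧ b.coord 1 x ≤ q ∧ p + q - 1 ≤ b.coord 0 x + b.coord 1 x}
      (gridTriangle b 1) 1 := by
  have hp : b.coord 0 (p • b 0 + q • b 1) = p := by simp
  have hq : b.coord 1 (p • b 0 + q • b 1) = q := by simp
  convert! IsTiledBy.image (gridTriangle b 1) (IsometryEquiv.subLeft (p • b 0 + q • b 1)) using 1
  ext x
  rw [← IsometryEquiv.preimage_symm]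
  simp only [gridTriangle, IsometryEquiv.subLeft_symm_apply, Set.mem_preimage, Set.mem_ofPred_eq,
    map_add (b.coord _) (-x), map_neg, hp, hq]
  grind

lemma isTiledBy_gridTriangle_strip (r : ℝ) (k : ℕ) :
    IsTiledBy {x | 0 ≤ b.coord 1 x ∧ r - k ≤ b.coord 0 x ∧ r ≤ b.coord 0 x + b.coord 1 x ∧
      b.coord 0 x + b.coord 1 x ≤ r + 1} (gridTriangle b 1) (2 * k + 1) := by
  induction k with
  | zero =>
    convert! isTiledBy_gridTriangle_upward b r 0 using 1
    ext x
    simp only [Set.mem_ofPred_eq, Nat.cast_zero]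
    grind
  | succ k ih =>
    have hk : (0 : ℝ) ≤ k := k.cast_nonneg
    have hcut : 2 * (k + 1) + 1 = 1 + 1 + (2 * k + 1) := by ring
    rw [hcut]
    -- Cutting along `b.coord 0 = r - k` splits off a unit parallelogram from the end of the strip.
    refine .of_cut (basis_coord_ne_zero b 0) (r - k)
      (.of_cut (basis_coord_ne_zero b 1) (k + 1) ?_ ?_) ?_
    · convert! isTiledBy_gridTriangle_downward b (r - k) (k + 1) using 1
      ext x
      simp only [Set.mem_inter_iff, Set.mem_ofPred_eq, Nat.cast_add, Nat.cast_one]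
      grind
    · convert! isTiledBy_gridTriangle_upward b (r - k - 1) (k + 1) using 1
      ext x
      simp only [Set.mem_inter_iff, Set.mem_ofPred_eq, Nat.cast_add, Nat.cast_one]
      grind
    · convert! ih using 1
      ext x
      simp only [Set.mem_inter_iff, Set.mem_ofPred_eq, Nat.cast_add, Nat.cast_one]
      grind

theorem isTiledBy_gridTriangle {n : ℕ} (hn : 0 < n) :
    IsTiledBy (gridTriangle b n) (gridTriangle b 1) (n ^ 2) := by
  induction n, hn using Nat.le_induction with
  | base => simpa using IsTiledBy.image (gridTriangle b 1) 1
  | succ n _ ih =>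
    have hcut : (n + 1) ^ 2 = n ^ 2 + (2 * n + 1) := by ring
    have hsum : b.coord 0 + b.coord 1 ≠ 0 := fun h => by
      simpa using LinearMap.congr_fun h (b 0)
    rw [hcut]
    refine .of_cut hsum n ?_ ?_
    · convert! ih using 1
      ext x
      simp only [gridTriangle, Set.mem_inter_iff, Set.mem_ofPred_eq, LinearMap.add_apply,
        Nat.cast_add, Nat.cast_one]
      grind
    · convert! isTiledBy_gridTriangle_strip b n n using 1
      ext x
      simp only [gridTriangle, Set.mem_inter_iff, Set.mem_ofPred_eq, LinearMap.add_apply,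
        Nat.cast_add, Nat.cast_one]
      grind

end Grid

open scoped Pointwise in
lemma isTiledBy_convexHull_triangle {E : Type*} [SeminormedAddCommGroup E] [NormedSpace ℝ E]
    (hE : Module.finrank ℝ E = 2) (P : E) {u v : E} (huv : LinearIndependent ℝ ![u, v])
    {n : ℕ} (hn : 0 < n) :
    IsTiledBy (convexHull ℝ {P, P + (n : ℝ) • u, P + (n : ℝ) • v}) (convexHull ℝ {0, u, v})
      (n ^ 2) := by
  let b := basisOfLinearIndependentOfCardEqFinrank huv (by rw [hE, Fintype.card_fin])
  have hu : b 0 = u := by simp [b]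
  have hv : b 1 = v := by simp [b]
  have hvertices : {P, P + (n : ℝ) • u, P + (n : ℝ) • v} =
      P +ᵥ ({0, (n : ℝ) • u, (n : ℝ) • v} : Set E) := by
    simp [← Set.image_vadd, Set.image_insert_eq]
  have htile := (isTiledBy_gridTriangle b hn).image_image (.constVAdd P) 1
  rw [gridTriangle_eq_convexHull b (Nat.cast_pos.2 hn), gridTriangle_eq_convexHull b one_pos,
    hu, hv, one_smul, one_smul, IsometryEquiv.coe_one, Set.image_id] at htile
  rw [hvertices, convexHull_vadd]
  exact htile

section Congruence

variable {ι V : Type*} [NormedAddCommGroup V] [InnerProductSpace ℝ V] [FiniteDimensional ℝ V]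

lemma exists_linearIsometryEquiv_of_inner_eq {u v : ι → V}
    (h : ∀ i j, inner ℝ (u i) (u j) = inner ℝ (v i) (v j)) :
    ∃ e : V ≃ₗᵢ[ℝ] V, ∀ i, e (u i) = v i := by
  set L := Finsupp.linearCombination ℝ u with hL
  set M := Finsupp.linearCombination ℝ v with hM
  -- This makes `L x ↦ M x` a well-defined isometry on the range of `L`, even for dependent `u`.
  have hnorm : ∀ x, ‖M x‖ = ‖L x‖ := fun x => by
    rw [norm_eq_sqrt_real_inner, norm_eq_sqrt_real_inner]
    simp only [hL, hM, Finsupp.linearCombination_apply, Finsupp.sum_inner, Finsupp.inner_sum,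
      real_inner_smul_left, real_inner_smul_right, h]
  obtain ⟨s, hs⟩ := L.rangeRestrict.exists_rightInverse_of_surjective L.range_rangeRestrict
  have hLs : ∀ y, L (s y) = y := fun y => congrArg Subtype.val (LinearMap.congr_fun hs y)
  let T : L.range →ₗᵢ[ℝ] V := ⟨M ∘ₗ s, fun y => by simp [hnorm, hLs]⟩
  refine ⟨T.extend.toLinearIsometryEquiv rfl, fun i => ?_⟩
  have hui : L (Finsupp.single i 1) = u i := by simp [hL]
  have hvi : M (Finsupp.single i 1) = v i := by simp [hM]
  let y : L.range := ⟨u i, _, hui⟩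
  have hdiff : M (s y - Finsupp.single i 1) = 0 := by
    rw [← norm_eq_zero, hnorm, map_sub, hLs, hui, sub_self, norm_zero]
  calc T.extend (u i) = M (s y) := T.extend_apply y
    _ = v i := by rw [← hvi, ← sub_eq_zero, ← map_sub, hdiff]

theorem exists_affineIsometryEquiv_of_dist_eq {u v : ι → V}
    (h : ∀ i j, dist (u i) (u j) = dist (v i) (v j)) :
    ∃ e : V ≃ᵃⁱ[ℝ] V, ∀ i, e (u i) = v i := by
  cases isEmpty_or_nonempty ι
  · exact ⟨.refl ℝ V, isEmptyElim⟩
  inhabit ι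
  obtain ⟨e, he⟩ := exists_linearIsometryEquiv_of_inner_eq
    (u := fun i => u i - u default) (v := fun i => v i - v default) fun i j => by
      simp only [real_inner_eq_norm_mul_self_add_norm_mul_self_sub_norm_sub_mul_self_div_two,
        sub_sub_sub_cancel_right, ← dist_eq_norm, h]
  refine ⟨((AffineIsometryEquiv.vaddConst ℝ (u default)).symm.trans
    e.toAffineIsometryEquiv).trans (AffineIsometryEquiv.vaddConst ℝ (v default)), fun i => ?_⟩
  simp [he]

end Congruence

lemma not_collinear_of_dist_lt {V : Type*} [SeminormedAddCommGroup V] [NormedSpace ℝ V]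
    {P Q R : V} (hP : dist Q R < dist P R + dist P Q) (hQ : dist P R < dist P Q + dist Q R)
    (hR : dist P Q < dist Q R + dist P R) : ¬ Collinear ℝ {P, Q, R} := fun hcol => by
  rcases hcol.wbtw_or_wbtw_or_wbtw with hw | hw | hw
  · exact hQ.ne hw.dist_add_dist.symm
  · exact hR.ne (by simpa only [dist_comm] using hw.dist_add_dist.symm)
  · exact hP.ne (by simpa only [dist_comm] using hw.dist_add_dist.symm)

lemma linearIndependent_sub_sub_of_not_collinear {k V : Type*} [DivisionRing k] [AddCommGroup V]
    [Module k V] {P Q R : V} (h : ¬ Collinear k {P, Q, R}) :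
    LinearIndependent k ![Q - P, R - P] := by
  rw [← affineIndependent_iff_not_collinear_set,
    affineIndependent_iff_linearIndependent_vsub k ![P, Q, R] 0] at h
  have hinj : Function.Injective
      (![⟨1, by decide⟩, ⟨2, by decide⟩] : Fin 2 → {i : Fin 3 // i ≠ 0}) := by decide
  convert! h.comp _ hinj using 1
  ext i
  fin_cases i <;> rfl

section Triangles

variable {p q r : ℝ} {S T : Set Plane} {N M : ℕ}

lemma tilesInto_iff_exists_isTiledBy :
    TilesInto S N p q r ↔ ∃ Δ, IsTriangle p q r Δ ∧ IsTiledBy S Δ N := by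
  constructor
  · rintro ⟨f, Δ, hΔ, hS⟩
    exact ⟨Δ, hΔ, f, hS⟩
  · rintro ⟨Δ, hΔ, f, hS⟩
    exact ⟨f, Δ, hΔ, hS⟩

theorem IsTriangle.exists_image_eq (hS : IsTriangle p q r S) (hT : IsTriangle p q r T) :
    ∃ e : Plane ≃ᵢ Plane, e '' S = T := by
  obtain ⟨P, Q, R, rfl, rfl, rfl, rfl⟩ := hS
  obtain ⟨P', Q', R', hQR, hPR, hPQ, rfl⟩ := hT
  obtain ⟨e, he⟩ := exists_affineIsometryEquiv_of_dist_eq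
    (EuclideanGeometry.side_side_side hPQ.symm hQR.symm
      (by rw [dist_comm, ← hPR, dist_comm])).dist_eq
  have hvertices : e P = P' ∧ e Q = Q' ∧ e R = R' := ⟨he 0, he 1, he 2⟩
  refine ⟨e.toIsometryEquiv, ?_⟩
  have himage := e.toAffineEquiv.toAffineMap.image_convexHull {P, Q, R}
  simpa [Set.image_insert_eq, hvertices] using himage

lemma TilesInto.union (hS : TilesInto S N p q r) (hT : TilesInto T M p q r)
    (hST : interior S ∩ interior T = ∅) : TilesInto (S ∪ T) (N + M) p q r := by
  rw [tilesInto_iff_exists_isTiledBy] at *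
  obtain ⟨Δ, hΔ, hS⟩ := hS
  obtain ⟨Δ', hΔ', hT⟩ := hT
  obtain ⟨e, rfl⟩ := hΔ'.exists_image_eq hΔ
  exact ⟨_, hΔ, hS.union (by simpa using hT.image_image 1 e) hST⟩

end Triangles

theorem IsTriangle.tilesInto_sq {p q r : ℝ} {T : Set Plane} {n : ℕ} (hn : 0 < n)
    (hT : IsTriangle (n * p) (n * q) (n * r) T)
    (hp : p < q + r) (hq : q < r + p) (hr : r < p + q) : TilesInto T (n ^ 2) p q r := by
  obtain ⟨P, Q, R, hQR, hPR, hPQ, rfl⟩ := hT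
  have hn₀ : (n : ℝ) ≠ 0 := Nat.cast_ne_zero.2 hn.ne'
  obtain ⟨u, rfl⟩ : ∃ u, P + (n : ℝ) • u = Q :=
    ⟨(n : ℝ)⁻¹ • (Q - P), by rw [smul_inv_smul₀ hn₀, add_sub_cancel]⟩
  obtain ⟨v, rfl⟩ : ∃ v, P + (n : ℝ) • v = R :=
    ⟨(n : ℝ)⁻¹ • (R - P), by rw [smul_inv_smul₀ hn₀, add_sub_cancel]⟩
  simp only [dist_add_left, dist_self_add_right, dist_smul₀, norm_smul, Real.norm_natCast,
    mul_right_inj' hn₀] at hQR hPR hPQ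
  have hcol : ¬ Collinear ℝ {0, u, v} := by
    apply not_collinear_of_dist_lt <;> simpa only [dist_zero_left, hQR, hPR, hPQ]
  have hlin : LinearIndependent ℝ ![u, v] := by
    simpa only [sub_zero] using linearIndependent_sub_sub_of_not_collinear hcol
  have htile : IsTriangle p q r (convexHull ℝ {0, u, v}) :=
    ⟨0, u, v, hQR, by simpa using hPR, by simpa using hPQ, rfl⟩
  exact tilesInto_iff_exists_isTiledBy.2 ⟨_, htile,
    isTiledBy_convexHull_triangle finrank_euclideanSpace_fin P hlin hn⟩

section Trapezoid

variable {p q r : ℝ}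

lemma TilesInto.convexHull_union {S T W : Set Plane} {N M : ℕ} {f : Plane →ₗ[ℝ] ℝ} {c : ℝ}
    (hS : TilesInto (convexHull ℝ (S ∪ W)) N p q r)
    (hT : TilesInto (convexHull ℝ (T ∪ W)) M p q r)
    (hcover : convexHull ℝ (S ∪ T) = convexHull ℝ (S ∪ W) ∪ convexHull ℝ (T ∪ W))
    (hf : f ≠ 0) (hfS : ∀ x ∈ S ∪ W, f x ≤ c) (hfT : ∀ x ∈ T ∪ W, c ≤ f x) :
    TilesInto (convexHull ℝ (S ∪ T)) (N + M) p q r := by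
  rw [hcover]
  exact hS.union hT (interior_inter_interior_eq_empty_of_le_of_ge hf
    (convexHull_min hfS (convex_halfSpace_le f.isLinear c))
    (convexHull_min hfT (convex_halfSpace_ge f.isLinear c)))

lemma inner_pt (x y x' y' : ℝ) : inner ℝ (pt x y) (pt x' y') = x * x' + y * y' := by
  simp [pt, EuclideanSpace.inner_eq_star_dotProduct, dotProduct, Fin.sum_univ_two]
  ring

lemma pt_add_smul (x y t : ℝ) : pt x y + t • pt 1 0 = pt (x + t) y := by
  ext i
  fin_cases i <;> simp [pt]

lemma pt_mem_segment {x₁ x x₂ : ℝ} (h₁ : x₁ ≤ x) (h₂ : x ≤ x₂) (y : ℝ) :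
    pt x y ∈ segment ℝ (pt x₁ y) (pt x₂ y) := by
  obtain ⟨s, t, hs, ht, hst, rfl⟩ : x ∈ segment ℝ x₁ x₂ := by
    rw [segment_eq_Icc (h₁.trans h₂)]
    exact ⟨h₁, h₂⟩
  refine ⟨s, t, hs, ht, hst, ?_⟩
  ext i
  fin_cases i <;> simp [pt, ← add_mul, hst]

lemma segment_pt_inter_segment_pt_nonempty {x₁ y₁ x₂ y₂ m n : ℝ} (hm : 0 ≤ m) (hn : 0 < n) :
    (segment ℝ (pt x₁ y₁) (pt (x₂ + m) y₂) ∩ segment ℝ (pt (x₁ + n) y₁) (pt x₂ y₂)).Nonempty := by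
  simpa only [pt_add_smul] using diagonals_inter_nonempty (pt x₁ y₁) (pt x₂ y₂) (pt 1 0) hm hn

lemma innerₗ_pt_ne_zero {x y : ℝ} (hx : x ≠ 0) : innerₗ Plane (pt x y) ≠ 0 := fun h => by
  simpa [inner_pt, hx] using LinearMap.congr_fun h (pt 1 0)

theorem TilesInto.convexHull_trapezoid_right {e ξ δ h : ℝ} {N M : ℕ} (he : 0 < e) (hh : 0 < h)
    (hξδ : ξ ≤ δ) (hOEX : TilesInto (convexHull ℝ {pt 0 0, pt e 0, pt ξ h}) N p q r)
    (hEDX : TilesInto (convexHull ℝ {pt e 0, pt δ h, pt ξ h}) M p q r) :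
    TilesInto (convexHull ℝ {pt 0 0, pt e 0, pt δ h, pt ξ h}) (N + M) p q r := by
  have hW : {pt e 0, pt ξ h} ⊆ ({pt e 0, pt δ h, pt ξ h} : Set Plane) :=
    Set.insert_subset_insert (Set.subset_insert _ _)
  have hTW := Set.union_eq_left.2 hW
  rw [← Set.singleton_union] at hOEX ⊢
  rw [← hTW] at hEDX
  -- The functional is constant on the line through `E = (e, 0)` and `X = (ξ, h)`.
  refine hOEX.convexHull_union (f := innerₗ Plane (pt h (e - ξ))) (c := h * e) hEDX
    (convexHull_union_eq_union_of_segments_meet (by simp) (by simp) ?_ ?_)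
    (innerₗ_pt_ne_zero hh.ne') ?_ ?_
  · exact (hW.trans Set.subset_union_right).trans (subset_convexHull ℝ _)
  · rintro _ rfl
    simp only [convexHull_pair, Set.forall_mem_insert, Set.mem_singleton_iff, forall_eq]
    refine ⟨⟨_, right_mem_segment .., left_mem_segment ..⟩, ?_,
      ⟨_, right_mem_segment .., right_mem_segment ..⟩⟩
    simpa using segment_pt_inter_segment_pt_nonempty (x₁ := 0) (x₂ := ξ) (y₁ := 0) (y₂ := h)
      (sub_nonneg.2 hξδ) he
  · rintro _ (rfl | rfl | rfl)
    all_goals simp only [innerₗ_apply_apply, inner_pt]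
    all_goals nlinarith
  · rw [hTW]
    rintro _ (rfl | rfl | rfl)
    all_goals simp only [innerₗ_apply_apply, inner_pt]
    all_goals nlinarith

theorem TilesInto.convexHull_trapezoid {e α ξ δ h : ℝ} {N M K : ℕ} (he : 0 < e) (hh : 0 < h)
    (hαξ : α ≤ ξ) (hξδ : ξ ≤ δ)
    (hAOX : TilesInto (convexHull ℝ {pt α h, pt 0 0, pt ξ h}) N p q r)
    (hOEX : TilesInto (convexHull ℝ {pt 0 0, pt e 0, pt ξ h}) M p q r)
    (hEDX : TilesInto (convexHull ℝ {pt e 0, pt δ h, pt ξ h}) K p q r) :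
    TilesInto (convexHull ℝ {pt 0 0, pt e 0, pt δ h, pt α h}) (N + (M + K)) p q r := by
  have hright := hOEX.convexHull_trapezoid_right he hh hξδ hEDX
  have hW : {pt 0 0, pt e 0, pt δ h} ∪ {pt 0 0, pt ξ h} =
      ({pt 0 0, pt e 0, pt δ h, pt ξ h} : Set Plane) := by grind
  have hvertices : {pt 0 0, pt e 0, pt δ h, pt α h} =
      ({pt α h} ∪ {pt 0 0, pt e 0, pt δ h} : Set Plane) := by grind
  have hX := pt_mem_segment hαξ hξδ h
  rw [← Set.singleton_union] at hAOX
  rw [hvertices]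
  rw [← hW] at hright
  -- The functional is constant on the line through the origin and `X = (ξ, h)`.
  refine hAOX.convexHull_union (f := innerₗ Plane (pt h (-ξ))) (c := 0) hright
    (convexHull_union_eq_union_of_segments_meet (by simp) (by simp) ?_ ?_)
    (innerₗ_pt_ne_zero hh.ne') ?_ ?_
  · rintro _ (rfl | rfl)
    · exact subset_convexHull ℝ _ (by grind)
    · exact segment_subset_convexHull (by simp) (by simp) hX
  · rintro _ rfl
    simp only [convexHull_pair, Set.forall_mem_insert, Set.mem_singleton_iff, forall_eq]
    refine ⟨⟨_, right_mem_segment .., left_mem_segment ..⟩, ?_, ⟨_, hX, right_mem_segment ..⟩⟩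
    rw [segment_symm, Set.inter_comm]
    simpa using segment_pt_inter_segment_pt_nonempty (x₁ := 0) (x₂ := α) (y₁ := 0) (y₂ := h)
      (sub_nonneg.2 hαξ) he
  · rintro _ (rfl | rfl | rfl)
    all_goals simp only [innerₗ_apply_apply, inner_pt]
    all_goals nlinarith
  · rw [hW]
    rintro _ (rfl | rfl | rfl | rfl)
    all_goals simp only [innerₗ_apply_apply, inner_pt]
    all_goals nlinarith

end Trapezoid

section CutTriangles

lemma dist_pt_eq {x y x' y' d : ℝ} (hd : 0 ≤ d) (h : (x - x') ^ 2 + (y - y') ^ 2 = d ^ 2) :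
    dist (pt x y) (pt x' y') = d := by
  rw [← Real.sqrt_sq hd, ← h]
  simp [pt, EuclideanSpace.dist_eq, Fin.sum_univ_two, Real.dist_eq]

variable {a b c : ℝ}

lemma isTriangle_trapezoid_left (ha : 0 < a) (hb : 0 < b) (hc : 0 < c)
    (h : c ^ 2 = a ^ 2 + b ^ 2 + a * b) :
    IsTriangle (a * a) (a * b) (a * c) (convexHull ℝ {pt (a * b / 2) (a * b * √3 / 2), pt 0 0,
      pt (a * b / 2 + a ^ 2) (a * b * √3 / 2)}) := by
  have h3 : √3 ^ 2 = 3 := Real.sq_sqrt zero_le_three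
  refine ⟨pt 0 0, pt (a * b / 2 + a ^ 2) (a * b * √3 / 2), pt (a * b / 2) (a * b * √3 / 2),
    dist_pt_eq (by positivity) (by ring), dist_pt_eq (by positivity) ?_,
    dist_pt_eq (by positivity) ?_, by congr 1; grind⟩
  · linear_combination (a * b) ^ 2 / 4 * h3
  · linear_combination (a * b) ^ 2 / 4 * h3 - a ^ 2 * h

lemma isTriangle_trapezoid_middle (ha : 0 < a) (hb : 0 < b) (hc : 0 < c)
    (h : c ^ 2 = a ^ 2 + b ^ 2 + a * b) :
    IsTriangle (c * a) (c * b) (c * c) (convexHull ℝ {pt 0 0, pt (a ^ 2 + b ^ 2 + a * b) 0,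
      pt (a * b / 2 + a ^ 2) (a * b * √3 / 2)}) := by
  have h3 : √3 ^ 2 = 3 := Real.sq_sqrt zero_le_three
  rw [← h]
  refine ⟨pt (c ^ 2) 0, pt 0 0, pt (a * b / 2 + a ^ 2) (a * b * √3 / 2),
    dist_pt_eq (by positivity) ?_, dist_pt_eq (by positivity) ?_,
    dist_pt_eq (by positivity) (by ring), by rw [Set.insert_comm]⟩
  · linear_combination (a * b) ^ 2 / 4 * h3 - a ^ 2 * h
  · linear_combination (a * b) ^ 2 / 4 * h3 + (c ^ 2 - a ^ 2) * h

lemma isTriangle_trapezoid_right (ha : 0 < a) (hb : 0 < b) (hc : 0 < c)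
    (h : c ^ 2 = a ^ 2 + b ^ 2 + a * b) :
    IsTriangle (b * a) (b * b) (b * c) (convexHull ℝ {pt (a ^ 2 + b ^ 2 + a * b) 0,
      pt (a ^ 2 + b ^ 2 + a * b / 2) (a * b * √3 / 2),
      pt (a * b / 2 + a ^ 2) (a * b * √3 / 2)}) := by
  have h3 : √3 ^ 2 = 3 := Real.sq_sqrt zero_le_three
  refine ⟨pt (a * b / 2 + a ^ 2) (a * b * √3 / 2), pt (a ^ 2 + b ^ 2 + a * b) 0,
    pt (a ^ 2 + b ^ 2 + a * b / 2) (a * b * √3 / 2), dist_pt_eq (by positivity) ?_,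
    dist_pt_eq (by positivity) (by ring), dist_pt_eq (by positivity) ?_, by congr 1; grind⟩
  · linear_combination (a * b) ^ 2 / 4 * h3
  · linear_combination (a * b) ^ 2 / 4 * h3 - b ^ 2 * h

lemma strict_triangle_ineq_of_sq_eq (ha : 0 < a) (hb : 0 < b) (hc : 0 < c)
    (h : c ^ 2 = a ^ 2 + b ^ 2 + a * b) : a < b + c ∧ b < c + a ∧ c < a + b := by
  refine ⟨?_, ?_, ?_⟩ <;> nlinarith [mul_pos ha hb]

end CutTriangles

theorem stmt0 (a b c : ℕ) (ha : 0 < a) (hb : 0 < b) (hc : 0 < c)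
    (h : c ^ 2 = a ^ 2 + b ^ 2 + a * b) :
    TilesInto (IdealTrapezoid ((a : ℝ) ^ 2 + (b : ℝ) ^ 2) ((a : ℝ) * b))
      (a ^ 2 + b ^ 2 + c ^ 2) a b c := by
  have ha' : (0 : ℝ) < a := Nat.cast_pos.2 ha
  have hb' : (0 : ℝ) < b := Nat.cast_pos.2 hb
  have hc' : (0 : ℝ) < c := Nat.cast_pos.2 hc
  have h' : (c : ℝ) ^ 2 = a ^ 2 + b ^ 2 + a * b := mod_cast h
  obtain ⟨hlt_a, hlt_b, hlt_c⟩ := strict_triangle_ineq_of_sq_eq ha' hb' hc' h'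
  have hleft := (isTriangle_trapezoid_left ha' hb' hc' h').tilesInto_sq ha hlt_a hlt_b hlt_c
  have hmiddle := (isTriangle_trapezoid_middle ha' hb' hc' h').tilesInto_sq hc hlt_a hlt_b hlt_c
  have hright := (isTriangle_trapezoid_right ha' hb' hc' h').tilesInto_sq hb hlt_a hlt_b hlt_c
  rw [add_assoc, add_comm (b ^ 2)]
  exact hleft.convexHull_trapezoid (by positivity) (by positivity)
    (by linarith [sq_nonneg (a : ℝ)]) (by linarith [sq_nonneg (b : ℝ)]) hmiddle hright
end
end

section
/- Let a, b, c be pairwise coprime positive integers with c² = a² + b² + ab, and let M = 3·⌈(c² − a − b)/(ab)⌉. Then for every integer m ≥ M, the equilateral triangle with side length m·ab tiles into m²·ab congruent copies of the triangle with side lengths (a, b, c). -/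
noncomputable section

/-- The equilateral triangle with side length `X`. -/
def EquilateralTri (X : ℝ) : Set Plane :=
  convexHull ℝ {pt 0 0, pt X 0, pt (X/2) (X * Real.sqrt 3 / 2)}

/-!
Cover the equilateral triangle by the right number of tiles; since the areas then add up, the tiles
cannot overlap. In a frame of unit vectors at `60°`, cut the triangle of side `m * a * b` along
three segments from an interior point, parallel to the sides, into a pinwheel of three trapezoids
with heights and short sides at least `K * a * b`, and each trapezoid into layers of height `a * b`.
A layer with short side `a ^ 2 + b ^ 2` splits into three triangles similar to the tile with ratios
`a`, `c` and `b`; adding parallelogram strips of widths `a` and `b` reaches every short side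
`a ^ 2 + b ^ 2 + i * a + j * b`, and the bound on `K` is the Frobenius bound that makes every
`T * a * b` with `K ≤ T` of this form.
-/

section Regions

variable {E : Type*} [AddCommGroup E] [Module ℝ E]

/-- The triangle with corner `P` and edge vectors `k • u` and `k • v` at that corner. -/
def triangleAt (P u v : E) (k : ℝ) : Set E :=
  {x | ∃ s t : ℝ, 0 ≤ s ∧ 0 ≤ t ∧ s + t ≤ k ∧ x = P + s • u + t • v}

/-- The parallelogram with corner `P` and edge vectors `k • u` and `l • v` at that corner. -/
def parallelogramAt (P u v : E) (k l : ℝ) : Set E :=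
  {x | ∃ s t : ℝ, 0 ≤ s ∧ s ≤ k ∧ 0 ≤ t ∧ t ≤ l ∧ x = P + s • u + t • v}

/-- The trapezoid with corner `P`, legs `h • v` and `h • (v - u)`, and parallel sides `(h + l) • u`
(at the corner) and `l • u`. Its second size parameter is the length of the short parallel side. -/
def trapezoidAt (P u v : E) (h l : ℝ) : Set E :=
  {x | ∃ s t : ℝ, 0 ≤ s ∧ 0 ≤ t ∧ t ≤ h ∧ s + t ≤ h + l ∧ x = P + s • u + t • v}

variable {P u v : E} {h h' k l l' x y z : ℝ}

lemma convexHull_eq_triangleAt (P u v : E) :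
    convexHull ℝ {P, P + u, P + v} = triangleAt P u v 1 := by
  apply Set.Subset.antisymm
  · apply convexHull_min
    · rintro x (rfl | rfl | rfl)
      · exact ⟨0, 0, by norm_num, by norm_num, by norm_num, by module⟩
      · exact ⟨1, 0, by norm_num, by norm_num, by norm_num, by module⟩
      · exact ⟨0, 1, by norm_num, by norm_num, by norm_num, by module⟩
    · rintro x ⟨s, t, hs, ht, hst, rfl⟩ y ⟨s', t', hs', ht', hst', rfl⟩ p q hp hq hpq
      refine ⟨p * s + q * s', p * t + q * t', by positivity, by positivity, by nlinarith, ?_⟩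
      obtain rfl : q = 1 - p := by linarith
      module
  · rintro x ⟨s, t, hs, ht, hst, rfl⟩
    have hmem := (convex_convexHull ℝ {P, P + u, P + v}).sum_mem (t := Finset.univ)
      (w := ![1 - s - t, s, t]) (z := ![P, P + u, P + v])
      (by simpa [Fin.forall_fin_succ, hs, ht] using by linarith)
      (by simp only [Fin.sum_univ_three, Matrix.cons_val]; ring)
      (fun i _ => subset_convexHull ℝ _ (by fin_cases i <;> simp))
    convert hmem using 1
    simp only [Fin.sum_univ_three, Matrix.cons_val]
    module

lemma image_triangleAt {F : Type*} [AddCommGroup F] [Module ℝ F] (f : E →ᵃ[ℝ] F) (P u v : E)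
    (k : ℝ) : f '' triangleAt P u v k = triangleAt (f P) (f.linear u) (f.linear v) k := by
  have hf (s t : ℝ) : f (P + s • u + t • v) = f P + s • f.linear u + t • f.linear v := by
    rw [add_assoc, add_comm P, ← vadd_eq_add, f.map_vadd]
    simp only [map_add, map_smul, vadd_eq_add]
    abel
  ext x
  constructor
  · rintro ⟨_, ⟨s, t, hs, ht, hst, rfl⟩, rfl⟩
    exact ⟨s, t, hs, ht, hst, hf s t⟩
  · rintro ⟨s, t, hs, ht, hst, rfl⟩
    exact ⟨_, ⟨s, t, hs, ht, hst, rfl⟩, hf s t⟩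

lemma triangleAt_smul (hk : 0 < k) : triangleAt P (k • u) (k • v) 1 = triangleAt P u v k := by
  ext x
  constructor
  · rintro ⟨s, t, hs, ht, hst, rfl⟩
    exact ⟨s * k, t * k, by positivity, by positivity, by nlinarith, by module⟩
  · rintro ⟨s, t, hs, ht, hst, rfl⟩
    refine ⟨s / k, t / k, by positivity, by positivity, ?_, ?_⟩
    · rwa [← add_div, div_le_one hk]
    · simp only [smul_smul, div_mul_cancel₀ _ hk.ne']

lemma parallelogramAt_smul (hx : 0 < x) (hy : 0 < y) :
    parallelogramAt P (x • u) (y • v) k l = parallelogramAt P u v (k * x) (l * y) := by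
  ext w
  constructor
  · rintro ⟨s, t, hs, hsk, ht, htl, rfl⟩
    exact ⟨s * x, t * y, by positivity, by gcongr, by positivity, by gcongr, by module⟩
  · rintro ⟨s, t, hs, hsk, ht, htl, rfl⟩
    refine ⟨s / x, t / y, by positivity, by rwa [div_le_iff₀ hx], by positivity,
      by rwa [div_le_iff₀ hy], ?_⟩
    simp only [smul_smul, div_mul_cancel₀ _ hx.ne', div_mul_cancel₀ _ hy.ne']

lemma parallelogramAt_neg :
    parallelogramAt (P + k • u) (-u) v k l = parallelogramAt P u v k l := by
  ext w
  constructor <;>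
  · rintro ⟨s, t, hs, hsk, ht, htl, rfl⟩
    exact ⟨k - s, t, by linarith, by linarith, ht, htl, by module⟩

lemma parallelogramAt_one_one :
    parallelogramAt P u v 1 1 = triangleAt P u v 1 ∪ triangleAt (P + u + v) (-u) (-v) 1 := by
  ext w
  constructor
  · rintro ⟨s, t, hs, hs1, ht, ht1, rfl⟩
    by_cases hst : s + t ≤ 1
    · exact .inl ⟨s, t, hs, ht, hst, rfl⟩
    · exact .inr ⟨1 - s, 1 - t, by linarith, by linarith, by linarith, by module⟩
  · rintro (⟨s, t, hs, ht, hst, rfl⟩ | ⟨s, t, hs, ht, hst, rfl⟩)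
    · exact ⟨s, t, hs, by linarith, ht, by linarith, rfl⟩
    · exact ⟨1 - s, 1 - t, by linarith, by linarith, by linarith, by linarith, by module⟩

lemma parallelogramAt_add (hl : 0 ≤ l) (hl' : 0 ≤ l') : parallelogramAt P u v k (l + l') =
    parallelogramAt P u v k l ∪ parallelogramAt (P + l • v) u v k l' := by
  ext w
  constructor
  · rintro ⟨s, t, hs, hsk, ht, htl, rfl⟩
    by_cases htl' : t ≤ l
    · exact .inl ⟨s, t, hs, hsk, ht, htl', rfl⟩
    · exact .inr ⟨s, t - l, hs, hsk, by linarith, by linarith, by module⟩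
  · rintro (⟨s, t, hs, hsk, ht, htl, rfl⟩ | ⟨s, t, hs, hsk, ht, htl, rfl⟩)
    · exact ⟨s, t, hs, hsk, ht, by linarith, rfl⟩
    · exact ⟨s, t + l, hs, hsk, by linarith, by linarith, by module⟩

lemma triangleAt_add (hk : 0 ≤ k) (hl : 0 ≤ l) : triangleAt P u v (k + l) =
    parallelogramAt P u v l k ∪ triangleAt (P + k • v) u v l ∪ triangleAt (P + l • u) u v k := by
  ext w
  constructor
  · rintro ⟨s, t, hs, ht, hst, rfl⟩
    by_cases hsl : s ≤ l
    · by_cases htk : t ≤ k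
      · exact .inl (.inl ⟨s, t, hs, hsl, ht, htk, rfl⟩)
      · exact .inl (.inr ⟨s, t - k, hs, by linarith, by linarith, by module⟩)
    · exact .inr ⟨s - l, t, by linarith, ht, by linarith, by module⟩
  · rintro ((⟨s, t, hs, hsl, ht, htk, rfl⟩ | ⟨s, t, hs, ht, hst, rfl⟩) | ⟨s, t, hs, ht, hst, rfl⟩)
    · exact ⟨s, t, hs, ht, by linarith, rfl⟩
    · exact ⟨s, t + k, hs, by linarith, by linarith, by module⟩
    · exact ⟨s + l, t, by linarith, ht, by linarith, by module⟩

lemma trapezoidAt_add_right (hk : 0 ≤ k) (hl : 0 ≤ l) : trapezoidAt P u v h (k + l) =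
    parallelogramAt P u v k h ∪ trapezoidAt (P + k • u) u v h l := by
  ext w
  constructor
  · rintro ⟨s, t, hs, ht, hth, hst, rfl⟩
    by_cases hsk : s ≤ k
    · exact .inl ⟨s, t, hs, hsk, ht, hth, rfl⟩
    · exact .inr ⟨s - k, t, by linarith, ht, hth, by linarith, by module⟩
  · rintro (⟨s, t, hs, hsk, ht, hth, rfl⟩ | ⟨s, t, hs, ht, hth, hst, rfl⟩)
    · exact ⟨s, t, hs, ht, hth, by linarith, rfl⟩
    · exact ⟨s + k, t, by linarith, ht, hth, by linarith, by module⟩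

lemma trapezoidAt_add_left (hh : 0 ≤ h) (hh' : 0 ≤ h') : trapezoidAt P u v (h + h') l =
    trapezoidAt P u v h (h' + l) ∪ trapezoidAt (P + h • v) u v h' l := by
  ext w
  constructor
  · rintro ⟨s, t, hs, ht, hth, hst, rfl⟩
    by_cases hth' : t ≤ h
    · exact .inl ⟨s, t, hs, ht, hth', by linarith, rfl⟩
    · exact .inr ⟨s, t - h, hs, by linarith, by linarith, by linarith, by module⟩
  · rintro (⟨s, t, hs, ht, hth, hst, rfl⟩ | ⟨s, t, hs, ht, hth, hst, rfl⟩)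
    · exact ⟨s, t, hs, ht, by linarith, by linarith, rfl⟩
    · exact ⟨s, t + h, hs, by linarith, by linarith, by linarith, by module⟩

/- The cuts join the point dividing the short side into `x` and `y` to the ends of the long side. -/
lemma trapezoidAt_eq_union_triangleAt (hh : 0 < h) (hx : 0 < x) (hy : 0 < y) :
    trapezoidAt P u v h (x + y) =
      triangleAt (P + h • v) (x • u) (-(h • v)) 1 ∪
        triangleAt (P + x • u + h • v) (-(x • u + h • v)) ((h + y) • u - h • v) 1 ∪
        triangleAt (P + (x + y) • u + h • v) (h • u - h • v) (-(y • u)) 1 := by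
  ext w
  constructor
  · rintro ⟨s, t, hs, ht, hth, hst, rfl⟩
    obtain ⟨t, rfl⟩ : ∃ t', t = h * t' := ⟨t / h, by field_simp⟩
    replace ht : 0 ≤ t := nonneg_of_mul_nonneg_right ht hh
    have ht1 : t ≤ 1 := by nlinarith
    by_cases hleft : s ≤ t * x
    · refine .inl (.inl ⟨s / x, 1 - t, by positivity, by linarith, ?_, ?_⟩)
      · have : s / x ≤ t := by rwa [div_le_iff₀ hx]
        linarith
      · match_scalars <;> field_simp
        ring
    by_cases hright : h + x + y - s - h * t ≤ t * y
    · refine .inr ⟨1 - t, (h + x + y - s - h * t) / y, by linarith,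
        div_nonneg (by linarith) hy.le, ?_, ?_⟩
      · have : (h + x + y - s - h * t) / y ≤ t := by rwa [div_le_iff₀ hy]
        linarith
      · match_scalars <;> field_simp <;> ring
    · have hτ : (s - t * x) / (h + x + y) ≤ 1 - t := by
        rw [div_le_iff₀ (by positivity)]; linarith
      refine .inl (.inr ⟨1 - t - (s - t * x) / (h + x + y), (s - t * x) / (h + x + y),
        by linarith, div_nonneg (by linarith) (by positivity), by linarith, ?_⟩)
      match_scalars <;> field_simp <;> ring
  · rintro ((⟨s, t, hs, ht, hst, rfl⟩ | ⟨s, t, hs, ht, hst, rfl⟩) | ⟨s, t, hs, ht, hst, rfl⟩)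
    · exact ⟨s * x, h - t * h, by positivity, by nlinarith, by nlinarith, by nlinarith, by module⟩
    · exact ⟨x - s * x + t * (h + y), h - (s + t) * h, by nlinarith, by nlinarith, by nlinarith,
        by nlinarith, by module⟩
    · exact ⟨x + y + s * h - t * y, h - s * h, by nlinarith, by nlinarith, by nlinarith,
        by nlinarith, by module⟩

/- A pinwheel: the three cuts meet at `P + y • u + x • v`. -/
lemma triangleAt_eq_union_trapezoidAt (hx : 0 ≤ x) (hy : 0 ≤ y) (hz : 0 ≤ z) :
    triangleAt P u v (x + y + z) =
      trapezoidAt (P + y • u) u v x z ∪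
        trapezoidAt (P + (x + y) • v) (-v) (u - v) y x ∪
        trapezoidAt (P + (y + z) • u + x • v) (v - u) (-u) z y := by
  ext w
  constructor
  · rintro ⟨s, t, hs, ht, hst, rfl⟩
    by_cases h1 : t ≤ x ∧ y ≤ s
    · exact .inl (.inl ⟨s - y, t, by linarith, ht, by linarith, by linarith, by module⟩)
    by_cases h2 : s ≤ y ∧ s + t ≤ x + y
    · exact .inl (.inr ⟨x + y - s - t, s, by linarith, hs, by linarith, by linarith, by module⟩)
    · have h3 : x ≤ t ∧ x + y ≤ s + t := by grind
      exact .inr ⟨t - x, x + y + z - s - t, by linarith, by linarith, by linarith, by linarith,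
        by module⟩
  · rintro ((⟨s, t, hs, ht, -, hst, rfl⟩ | ⟨s, t, hs, ht, -, hst, rfl⟩) |
      ⟨s, t, hs, ht, -, hst, rfl⟩)
    · exact ⟨s + y, t, by linarith, ht, by linarith, by module⟩
    · exact ⟨t, x + y - s - t, ht, by linarith, by linarith, by module⟩
    · exact ⟨y + z - s - t, x + s, by linarith, by linarith, by linarith, by module⟩

end Regions

/-- `u` and `v` are unit vectors at angle `60°`, encoded by the norm form of their real span. -/
def IsEisensteinPair {E : Type*} [NormedAddCommGroup E] [NormedSpace ℝ E] (u v : E) : Prop :=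
  ∀ x y : ℝ, ‖x • u + y • v‖ ^ 2 = x ^ 2 + x * y + y ^ 2

namespace IsEisensteinPair

variable {E : Type*} [NormedAddCommGroup E] [NormedSpace ℝ E] {u v : E}

lemma rotate (huv : IsEisensteinPair u v) : IsEisensteinPair (-v) (u - v) := fun x y => by
  rw [show x • -v + y • (u - v) = y • u + (-x - y) • v by module, huv]
  ring

lemma norm_eq (huv : IsEisensteinPair u v) {w : E} {x y z : ℝ} (hw : w = x • u + y • v)
    (hz : 0 ≤ z) (hxyz : x ^ 2 + x * y + y ^ 2 = z ^ 2) : ‖w‖ = z := by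
  rw [← sq_eq_sq₀ (norm_nonneg w) hz, hw, huv, hxyz]

end IsEisensteinPair

section Triangles

variable {p q r : ℝ} {P u v : Plane} {Δ : Set Plane}

lemma isTriangle_triangleAt (hu : ‖u‖ = p) (hv : ‖v‖ = q) (huv : ‖u - v‖ = r) :
    IsTriangle p q r (triangleAt P u v 1) := by
  refine ⟨P + v, P + u, P, by simpa, by simpa, ?_, ?_⟩
  · rw [dist_add_left, dist_eq_norm, norm_sub_rev, huv]
  · rw [← convexHull_eq_triangleAt]
    congr 1
    grind

lemma IsTriangle.exists_eq_triangleAt (hΔ : IsTriangle p q r Δ) :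
    ∃ P u v : Plane, ‖u‖ = p ∧ ‖v‖ = q ∧ ‖u - v‖ = r ∧ Δ = triangleAt P u v 1 := by
  obtain ⟨P, Q, R, hQR, hPR, hPQ, rfl⟩ := hΔ
  refine ⟨R, Q - R, P - R, by rwa [← dist_eq_norm], by rwa [← dist_eq_norm], ?_, ?_⟩
  · rw [sub_sub_sub_cancel_right, ← dist_eq_norm, dist_comm, hPQ]
  · rw [← convexHull_eq_triangleAt, add_sub_cancel, add_sub_cancel]
    congr 1
    grind

lemma IsTriangle.swap (hΔ : IsTriangle p q r Δ) : IsTriangle q p r Δ := by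
  obtain ⟨P, Q, R, hQR, hPR, hPQ, rfl⟩ := hΔ
  exact ⟨Q, P, R, hPR, hQR, by rw [dist_comm, hPQ], by rw [Set.insert_comm]⟩

lemma IsTriangle.isCompact (hΔ : IsTriangle p q r Δ) : IsCompact Δ := by
  obtain ⟨P, Q, R, -, -, -, rfl⟩ := hΔ
  exact (Set.toFinite _).isCompact_convexHull (𝕜 := ℝ)

lemma exists_linearIsometryEquiv_of_norm_eq {V W : Type*} [NormedAddCommGroup V]
    [InnerProductSpace ℝ V] [FiniteDimensional ℝ V] [AddCommGroup W] [Module ℝ W]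
    (f g : W →ₗ[ℝ] V) (hfg : ∀ x, ‖f x‖ = ‖g x‖) : ∃ L : V ≃ₗᵢ[ℝ] V, ∀ x, L (f x) = g x := by
  have hker : f.ker ≤ g.ker := fun x hx => by
    rw [LinearMap.mem_ker, ← norm_eq_zero] at hx ⊢
    rw [← hfg, hx]
  let g' : f.range →ₗ[ℝ] V := f.ker.liftQ g hker ∘ₗ f.quotKerEquivRange.symm
  have hg' (x : W) : g' ⟨f x, x, rfl⟩ = g x := by
    have hx : f.quotKerEquivRange.symm ⟨f x, x, rfl⟩ = f.ker.mkQ x :=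
      f.quotKerEquivRange_symm_apply_image x ⟨x, rfl⟩
    simp only [g', LinearMap.comp_apply, LinearEquiv.coe_coe, hx]
    exact f.ker.liftQ_apply g x
  let L : f.range →ₗᵢ[ℝ] V := ⟨g', by rintro ⟨_, x, rfl⟩; rw [hg', ← hfg]; rfl⟩
  refine ⟨L.extend.toLinearIsometryEquiv rfl, fun x => ?_⟩
  exact (L.extend_apply ⟨f x, x, rfl⟩).trans (hg' x)

lemma norm_smul_add_smul_sq {V : Type*} [NormedAddCommGroup V] [InnerProductSpace ℝ V] (u v : V)
    (s t : ℝ) : ‖s • u + t • v‖ ^ 2 =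
      s ^ 2 * ‖u‖ ^ 2 + t ^ 2 * ‖v‖ ^ 2 + s * t * (‖u‖ ^ 2 + ‖v‖ ^ 2 - ‖u - v‖ ^ 2) := by
  rw [norm_add_sq_real, norm_sub_sq_real, norm_smul, norm_smul, inner_smul_left, inner_smul_right,
    mul_pow, mul_pow, Real.norm_eq_abs, Real.norm_eq_abs, sq_abs, sq_abs, conj_trivial]
  ring

lemma IsTriangle.exists_isometryEquiv {Δ' : Set Plane} (hΔ : IsTriangle p q r Δ)
    (hΔ' : IsTriangle p q r Δ') : ∃ f : Plane ≃ᵢ Plane, f '' Δ = Δ' := by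
  obtain ⟨P, u, v, rfl, rfl, rfl, rfl⟩ := hΔ.exists_eq_triangleAt
  obtain ⟨P', u', v', hu, hv, huv, rfl⟩ := hΔ'.exists_eq_triangleAt
  let comb (u v : Plane) : ℝ × ℝ →ₗ[ℝ] Plane :=
    (LinearMap.toSpanSingleton ℝ Plane u).coprod (LinearMap.toSpanSingleton ℝ Plane v)
  have comb_apply (u v : Plane) (x : ℝ × ℝ) : comb u v x = x.1 • u + x.2 • v := rfl
  obtain ⟨L, hL⟩ := exists_linearIsometryEquiv_of_norm_eq (comb u v) (comb u' v') fun x => by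
    rw [← sq_eq_sq₀ (norm_nonneg _) (norm_nonneg _), comb_apply, comb_apply,
      norm_smul_add_smul_sq, norm_smul_add_smul_sq, hu, hv, huv]
  have hLu : L u = u' := by simpa only [comb_apply, one_smul, zero_smul, add_zero] using hL (1, 0)
  have hLv : L v = v' := by simpa only [comb_apply, one_smul, zero_smul, zero_add] using hL (0, 1)
  let f := L.toAffineIsometryEquiv.trans (AffineIsometryEquiv.constVAdd ℝ Plane (P' - L P))
  refine ⟨f.toIsometryEquiv, (image_triangleAt f.toAffineEquiv.toAffineMap P u v 1).trans ?_⟩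
  change triangleAt ((P' - L P) + L P) (L u) (L v) 1 = _
  rw [sub_add_cancel, hLu, hLv]

lemma IsTriangle.volume_eq {Δ' : Set Plane} (hΔ : IsTriangle p q r Δ)
    (hΔ' : IsTriangle p q r Δ') : MeasureTheory.volume Δ = MeasureTheory.volume Δ' := by
  obtain ⟨f, rfl⟩ := hΔ.exists_isometryEquiv hΔ'
  rw [← EuclideanSpace.euclideanHausdorffMeasure_eq_volume,
    f.isometry.euclideanHausdorffMeasure_image]

end Triangles

section Coordinates

variable {p q r : ℝ}

lemma equilateralTri_eq_triangleAt (X : ℝ) :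
    EquilateralTri X = triangleAt 0 (pt X 0) (pt (X / 2) (X * √3 / 2)) 1 := by
  have hpt : pt 0 0 = 0 := by ext i; fin_cases i <;> simp [pt]
  rw [← convexHull_eq_triangleAt, EquilateralTri, hpt, zero_add, zero_add]

lemma norm_pt_sq (x y : ℝ) : ‖pt x y‖ ^ 2 = x ^ 2 + y ^ 2 := by
  simp [EuclideanSpace.norm_sq_eq, Fin.sum_univ_two, pt]

lemma isEisensteinPair_pt : IsEisensteinPair (pt 1 0) (pt (1 / 2) (√3 / 2)) := fun x y => by
  have hpt : x • pt 1 0 + y • pt (1 / 2) (√3 / 2) = pt (x + y / 2) (y * √3 / 2) := by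
    ext i; fin_cases i <;> simp [pt] <;> ring
  rw [hpt, norm_pt_sq]
  linear_combination y ^ 2 / 4 * Real.sq_sqrt (zero_le_three (α := ℝ))

lemma equilateralTri_eq_triangleAt_smul {X : ℝ} (hX : 0 < X) :
    EquilateralTri X = triangleAt 0 (pt 1 0) (pt (1 / 2) (√3 / 2)) X := by
  rw [equilateralTri_eq_triangleAt, ← triangleAt_smul hX]
  congr 1 <;> ext i <;> fin_cases i <;> simp [pt] <;> ring

lemma isTriangle_triangleAt_pt (hp : 0 ≤ p) (hq : 0 ≤ q) (hr : 0 ≤ r)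
    (h : r ^ 2 = p ^ 2 + q ^ 2 + p * q) :
    IsTriangle p q r (triangleAt 0 (pt p 0) (pt (-q / 2) (q * √3 / 2)) 1) := by
  apply isTriangle_triangleAt <;> rw [← sq_eq_sq₀ (norm_nonneg _) (by assumption)]
  · rw [norm_pt_sq]
    ring
  · rw [norm_pt_sq]
    linear_combination q ^ 2 / 4 * Real.sq_sqrt (zero_le_three (α := ℝ))
  · have hpt : pt p 0 - pt (-q / 2) (q * √3 / 2) = pt (p + q / 2) (-(q * √3 / 2)) := by
      ext i; fin_cases i <;> simp [pt]; ring
    rw [hpt, norm_pt_sq, h]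
    linear_combination q ^ 2 / 4 * Real.sq_sqrt (zero_le_three (α := ℝ))

end Coordinates

section Measure

open MeasureTheory

lemma pairwise_aedisjoint_of_sum_measure_le {ι α : Type*} [Fintype ι] [MeasurableSpace α]
    {μ : Measure α} {A : ι → Set α} (hA : ∀ i, NullMeasurableSet (A i) μ)
    (hfin : ∀ i, μ (A i) ≠ ⊤) (hsum : ∑ i, μ (A i) ≤ μ (⋃ i, A i)) :
    Pairwise (Function.onFun (AEDisjoint μ) A) := by
  classical
  intro i j hij
  set B := ⋃ k ∈ Finset.univ.erase i, A k
  have hunion : B ∪ A i = ⋃ k, A k := by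
    ext x
    simp only [B, Set.mem_union, Set.mem_iUnion, Finset.mem_erase, Finset.mem_univ]
    grind
  have hle : μ (⋃ k, A k) + μ (B ∩ A i) ≤ μ (⋃ k, A k) + 0 := calc
    μ (⋃ k, A k) + μ (B ∩ A i) = μ B + μ (A i) := by
      rw [← hunion, measure_union_add_inter₀ B (hA i)]
    _ ≤ ∑ k ∈ Finset.univ.erase i, μ (A k) + μ (A i) := by
      gcongr
      exact measure_biUnion_finset_le _ _
    _ = ∑ k, μ (A k) := Finset.sum_erase_add _ _ (Finset.mem_univ i)
    _ ≤ μ (⋃ k, A k) + 0 := by rwa [add_zero]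
  have htop : μ (⋃ k, A k) ≠ ⊤ :=
    ((measure_iUnion_fintype_le μ A).trans_lt (ENNReal.sum_lt_top.2 fun k _ => (hfin k).lt_top)).ne
  refine measure_mono_null (t := B ∩ A i) (fun x hx => ⟨?_, hx.1⟩)
    (nonpos_iff_eq_zero.1 ((ENNReal.add_le_add_iff_left htop).1 hle))
  exact Set.mem_biUnion (Finset.mem_erase.2 ⟨hij.symm, Finset.mem_univ j⟩) hx.2

lemma interior_inter_interior_eq_empty_of_aedisjoint {α : Type*} [TopologicalSpace α]
    [MeasurableSpace α] {μ : Measure α} [μ.IsOpenPosMeasure] {s t : Set α}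
    (hst : AEDisjoint μ s t) : interior s ∩ interior t = ∅ :=
  (isOpen_interior.inter isOpen_interior).eq_empty_of_measure_zero
    (measure_mono_null (Set.inter_subset_inter interior_subset interior_subset) hst)

variable {p q r : ℝ} {Δ : Set Plane}

lemma volume_triangleAt_pt (x y z w : ℝ) : volume (triangleAt 0 (pt x y) (pt z w) 1) =
    ENNReal.ofReal |x * w - z * y| * volume (triangleAt 0 (pt 1 0) (pt 0 1) 1) := by
  let f : Plane →ₗ[ℝ] Plane := Matrix.toLpLin 2 2 !![x, z; y, w]
  have hf1 : f (pt 1 0) = pt x y := by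
    ext i; fin_cases i <;> simp [f, pt, Matrix.toLpLin_apply]
  have hf2 : f (pt 0 1) = pt z w := by
    ext i; fin_cases i <;> simp [f, pt, Matrix.toLpLin_apply]
  have hdet : LinearMap.det f = x * w - z * y := by
    rw [LinearMap.det_toLpLin, Matrix.det_fin_two_of]
  have himage : f '' triangleAt 0 (pt 1 0) (pt 0 1) 1 = triangleAt 0 (pt x y) (pt z w) 1 := by
    refine (image_triangleAt f.toAffineMap 0 (pt 1 0) (pt 0 1) 1).trans ?_
    change triangleAt (f 0) (f (pt 1 0)) (f (pt 0 1)) 1 = _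
    rw [map_zero, hf1, hf2]
  rw [← himage, Measure.addHaar_image_linearMap, hdet]

lemma IsTriangle.volume_eq_ofReal_mul (hΔ : IsTriangle p q r Δ)
    (h : r ^ 2 = p ^ 2 + q ^ 2 + p * q) : volume Δ =
      ENNReal.ofReal (p * q * (√3 / 2)) * volume (triangleAt 0 (pt 1 0) (pt 0 1) 1) := by
  obtain ⟨hp, hq, hr⟩ : 0 ≤ p ∧ 0 ≤ q ∧ 0 ≤ r := by
    obtain ⟨_, _, _, rfl, rfl, rfl, -⟩ := hΔ
    exact ⟨dist_nonneg, dist_nonneg, dist_nonneg⟩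
  rw [hΔ.volume_eq (isTriangle_triangleAt_pt hp hq hr h), volume_triangleAt_pt,
    show p * (q * √3 / 2) - -q / 2 * 0 = p * q * (√3 / 2) by ring, abs_of_nonneg (by positivity)]

lemma volume_equilateralTri (X : ℝ) : volume (EquilateralTri X) =
    ENNReal.ofReal (X ^ 2 * (√3 / 2)) * volume (triangleAt 0 (pt 1 0) (pt 0 1) 1) := by
  rw [equilateralTri_eq_triangleAt, volume_triangleAt_pt,
    show X * (X * √3 / 2) - X / 2 * 0 = X ^ 2 * (√3 / 2) by ring, abs_of_nonneg (by positivity)]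

end Measure

/-- `S` is a union of `N` triangles with side lengths `(p, q, r)`. Overlaps are allowed: for the
covers built here, comparing areas rules them out (`IsUnionOfTriangles.tilesInto`). -/
def IsUnionOfTriangles (S : Set Plane) (N : ℕ) (p q r : ℝ) : Prop :=
  ∃ T : Fin N → Set Plane, (∀ i, IsTriangle p q r (T i)) ∧ S = ⋃ i, T i

section Tilings

open MeasureTheory

variable {p q r k l h : ℝ} {P u v : Plane} {S S' Δ : Set Plane} {M N : ℕ}

lemma IsTriangle.isUnionOfTriangles_one (hΔ : IsTriangle p q r Δ) :
    IsUnionOfTriangles Δ 1 p q r :=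
  ⟨fun _ => Δ, fun _ => hΔ, (Set.iUnion_const Δ).symm⟩

namespace IsUnionOfTriangles

lemma union (hS : IsUnionOfTriangles S M p q r) (hS' : IsUnionOfTriangles S' N p q r) :
    IsUnionOfTriangles (S ∪ S') (M + N) p q r := by
  obtain ⟨T, hT, rfl⟩ := hS
  obtain ⟨T', hT', rfl⟩ := hS'
  refine ⟨Fin.append T T', Fin.addCases (by simpa using hT) (by simpa using hT'), ?_⟩
  ext x
  simp only [Set.mem_union, Set.mem_iUnion]
  constructor
  · rintro (⟨i, hi⟩ | ⟨i, hi⟩)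
    · exact ⟨Fin.castAdd N i, by rwa [Fin.append_left]⟩
    · exact ⟨Fin.natAdd M i, by rwa [Fin.append_right]⟩
  · rintro ⟨i, hi⟩
    induction i using Fin.addCases with
    | left i => exact .inl ⟨i, by rwa [Fin.append_left] at hi⟩
    | right i => exact .inr ⟨i, by rwa [Fin.append_right] at hi⟩

lemma swap (hS : IsUnionOfTriangles S N p q r) : IsUnionOfTriangles S N q p r :=
  let ⟨T, hT, hST⟩ := hS
  ⟨T, fun i => (hT i).swap, hST⟩

lemma tilesInto (hS : IsUnionOfTriangles S N p q r) (hΔ : IsTriangle p q r Δ)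
    (hvol : N * volume Δ ≤ volume S) : TilesInto S N p q r := by
  obtain ⟨T, hT, rfl⟩ := hS
  choose f hf using fun i => hΔ.exists_isometryEquiv (hT i)
  have hdisj : Pairwise (Function.onFun (AEDisjoint volume) T) :=
    pairwise_aedisjoint_of_sum_measure_le
      (fun i => (hT i).isCompact.measurableSet.nullMeasurableSet)
      (fun i => (hT i).isCompact.measure_ne_top)
      (by simpa [fun i => (hT i).volume_eq hΔ] using hvol)
  refine ⟨f, Δ, hΔ, by simp only [hf], fun i j hij => ?_⟩
  rw [hf, hf]
  exact interior_inter_interior_eq_empty_of_aedisjoint (hdisj hij)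

end IsUnionOfTriangles

lemma isUnionOfTriangles_parallelogramAt_one (hu : ‖u‖ = p) (hv : ‖v‖ = q)
    (huv : ‖u - v‖ = r) {n : ℕ} (hn : 0 < n) (P : Plane) :
    IsUnionOfTriangles (parallelogramAt P u v 1 n) (2 * n) p q r := by
  have one (P : Plane) : IsUnionOfTriangles (parallelogramAt P u v 1 1) 2 p q r := by
    rw [parallelogramAt_one_one]
    exact (isTriangle_triangleAt hu hv huv).isUnionOfTriangles_one.union
      (isTriangle_triangleAt (by rwa [norm_neg]) (by rwa [norm_neg])
        (by rwa [neg_sub_neg, norm_sub_rev])).isUnionOfTriangles_one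
  induction n, hn using Nat.le_induction generalizing P with
  | base => simpa using one P
  | succ n hn ih =>
    rw [Nat.cast_succ, parallelogramAt_add (by positivity) zero_le_one, mul_add, mul_one]
    exact (ih P).union (one _)

lemma isUnionOfTriangles_triangleAt (hu : ‖u‖ = p) (hv : ‖v‖ = q) (huv : ‖u - v‖ = r)
    {n : ℕ} (hn : 0 < n) (P : Plane) : IsUnionOfTriangles (triangleAt P u v n) (n ^ 2) p q r := by
  induction n, hn using Nat.le_induction generalizing P with
  | base =>
    rw [Nat.cast_one]
    exact (isTriangle_triangleAt hu hv huv).isUnionOfTriangles_one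
  | succ n hn ih =>
    rw [Nat.cast_succ, triangleAt_add n.cast_nonneg zero_le_one]
    convert ((isUnionOfTriangles_parallelogramAt_one hu hv huv hn P).union
      (isTriangle_triangleAt hu hv huv).isUnionOfTriangles_one).union (ih _) using 1
    ring

lemma IsTriangle.isUnionOfTriangles {n : ℕ} (hn : 0 < n)
    (hΔ : IsTriangle (n * p) (n * q) (n * r) Δ) : IsUnionOfTriangles Δ (n ^ 2) p q r := by
  obtain ⟨P, u, v, hu, hv, huv, rfl⟩ := hΔ.exists_eq_triangleAt
  have hn' : (0 : ℝ) < n := Nat.cast_pos.2 hn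
  have norm_inv_smul {w : Plane} {x : ℝ} (hw : ‖w‖ = n * x) : ‖(n : ℝ)⁻¹ • w‖ = x := by
    rw [norm_smul, hw, norm_inv, Real.norm_natCast, inv_mul_cancel_left₀ hn'.ne']
  have hcover := isUnionOfTriangles_triangleAt (norm_inv_smul hu) (norm_inv_smul hv)
    (by rw [← smul_sub, norm_inv_smul huv]) hn P
  rwa [← triangleAt_smul hn', smul_inv_smul₀ hn'.ne', smul_inv_smul₀ hn'.ne'] at hcover

lemma isUnionOfTriangles_trapezoidAt_mul_add (hk : 0 ≤ k) (hl : 0 ≤ l)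
    (hpar : ∀ P, IsUnionOfTriangles (parallelogramAt P u v k h) M p q r)
    (htrap : ∀ P, IsUnionOfTriangles (trapezoidAt P u v h l) N p q r) (n : ℕ) (P : Plane) :
    IsUnionOfTriangles (trapezoidAt P u v h (n * k + l)) (n * M + N) p q r := by
  induction n generalizing P with
  | zero => simpa using htrap P
  | succ n ih =>
    have hunion := (hpar P).union (ih (P + k • u))
    rw [← trapezoidAt_add_right hk (by positivity)] at hunion
    convert hunion using 1
    · push_cast; ring_nf
    · ring

end Tilings

namespace IsEisensteinPair

variable {a b c : ℕ} {u v : Plane}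

lemma isUnionOfTriangles_parallelogramAt (huv : IsEisensteinPair u v) (ha : 0 < a) (hb : 0 < b)
    (h : c ^ 2 = a ^ 2 + b ^ 2 + a * b) {n : ℕ} (hn : 0 < n) (P : Plane) :
    IsUnionOfTriangles (parallelogramAt P u v a (n * b)) (2 * n) a b c := by
  have hR : (c : ℝ) ^ 2 = a ^ 2 + b ^ 2 + a * b := mod_cast h
  have hcover := isUnionOfTriangles_parallelogramAt_one (u := (a : ℝ) • -u) (v := (b : ℝ) • v)
    (huv.norm_eq (x := -a) (y := 0) (by module) a.cast_nonneg (by ring))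
    (huv.norm_eq (x := 0) (y := b) (by module) b.cast_nonneg (by ring))
    (huv.norm_eq (x := -a) (y := -b) (by module) c.cast_nonneg (by rw [hR]; ring))
    hn (P + (a : ℝ) • u)
  rwa [parallelogramAt_smul (mod_cast ha) (mod_cast hb), one_mul, parallelogramAt_neg] at hcover

lemma isUnionOfTriangles_trapezoidAt_sq_add_sq (huv : IsEisensteinPair u v) (ha : 0 < a)
    (hb : 0 < b) (h : c ^ 2 = a ^ 2 + b ^ 2 + a * b) (P : Plane) :
    IsUnionOfTriangles (trapezoidAt P u v (a * b) (a ^ 2 + b ^ 2)) (a ^ 2 + c ^ 2 + b ^ 2)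
      a b c := by
  have hc : 0 < c := by
    by_contra! hc
    nlinarith
  have hR : (c : ℝ) ^ 2 = a ^ 2 + b ^ 2 + a * b := mod_cast h
  rw [trapezoidAt_eq_union_triangleAt (by positivity) (by positivity) (by positivity)]
  refine (((isTriangle_triangleAt ?_ ?_ ?_).isUnionOfTriangles ha).union
    ((isTriangle_triangleAt ?_ ?_ ?_).isUnionOfTriangles hc)).union
    ((isTriangle_triangleAt ?_ ?_ ?_).isUnionOfTriangles hb)
  · exact huv.norm_eq (x := a ^ 2) (y := 0) (by module) (by positivity) (by ring)
  · exact huv.norm_eq (x := 0) (y := -(a * b)) (by module) (by positivity) (by ring)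
  · exact huv.norm_eq (x := a ^ 2) (y := a * b) (by module) (by positivity)
      (by linear_combination -a ^ 2 * hR)
  · exact huv.norm_eq (x := -a ^ 2) (y := -(a * b)) (by module) (by positivity)
      (by linear_combination -a ^ 2 * hR)
  · exact huv.norm_eq (x := a * b + b ^ 2) (y := -(a * b)) (by module) (by positivity)
      (by linear_combination -b ^ 2 * hR)
  · exact huv.norm_eq (x := -c ^ 2) (y := 0) (by rw [hR]; module) (by positivity) (by ring)
  · exact huv.norm_eq (x := a * b) (y := -(a * b)) (by module) (by positivity) (by ring)
  · exact huv.norm_eq (x := -b ^ 2) (y := 0) (by module) (by positivity) (by ring)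
  · exact huv.norm_eq (x := a * b + b ^ 2) (y := -(a * b)) (by module) (by positivity)
      (by linear_combination -b ^ 2 * hR)

lemma isUnionOfTriangles_trapezoidAt_of_eq (huv : IsEisensteinPair u v) (ha : 0 < a) (hb : 0 < b)
    (h : c ^ 2 = a ^ 2 + b ^ 2 + a * b) {T i j : ℕ}
    (hT : T * (a * b) = a ^ 2 + b ^ 2 + i * a + j * b) (P : Plane) :
    IsUnionOfTriangles (trapezoidAt P u v (a * b) (T * (a * b))) (a * b * (2 * T + 1)) a b c := by
  have hTR : (T : ℝ) * (a * b) = a ^ 2 + b ^ 2 + i * a + j * b := mod_cast hT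
  have hpar_a (P : Plane) : IsUnionOfTriangles (parallelogramAt P u v a (a * b)) (2 * a) a b c :=
    huv.isUnionOfTriangles_parallelogramAt ha hb h ha P
  have hpar_b (P : Plane) : IsUnionOfTriangles (parallelogramAt P u v b (a * b)) (2 * b) a b c := by
    rw [mul_comm (a : ℝ)]
    exact (huv.isUnionOfTriangles_parallelogramAt hb ha (by rw [h]; ring) hb P).swap
  have hcover := isUnionOfTriangles_trapezoidAt_mul_add b.cast_nonneg (by positivity) hpar_b
    (isUnionOfTriangles_trapezoidAt_mul_add a.cast_nonneg (by positivity) hpar_a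
      (huv.isUnionOfTriangles_trapezoidAt_sq_add_sq ha hb h) i) j P
  convert hcover using 1
  · congr 1
    linear_combination hTR
  · linear_combination 2 * hT - h

lemma isUnionOfTriangles_trapezoidAt (huv : IsEisensteinPair u v) (ha : 0 < a) (hb : 0 < b)
    (h : c ^ 2 = a ^ 2 + b ^ 2 + a * b) {S : ℕ}
    (hS : ∀ T, S ≤ T → ∃ i j, T * (a * b) = a ^ 2 + b ^ 2 + i * a + j * b) {n : ℕ} (hn : 0 < n)
    (P : Plane) : IsUnionOfTriangles (trapezoidAt P u v (n * (a * b)) (S * (a * b)))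
      (a * b * (n * (n + 2 * S))) a b c := by
  have layer (T : ℕ) (hT : S ≤ T) (P : Plane) : IsUnionOfTriangles
      (trapezoidAt P u v (a * b) (T * (a * b))) (a * b * (2 * T + 1)) a b c :=
    let ⟨_, _, hij⟩ := hS T hT
    huv.isUnionOfTriangles_trapezoidAt_of_eq ha hb h hij P
  induction n, hn using Nat.le_induction generalizing P with
  | base => simpa [add_comm] using layer S le_rfl P
  | succ n hn ih =>
    have hunion := (layer (n + S) (Nat.le_add_left S n) P).union (ih (P + ((a : ℝ) * b) • v))
    rw [Nat.cast_add, add_mul, ← trapezoidAt_add_left (by positivity) (by positivity)] at hunion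
    convert hunion using 1
    · push_cast; ring_nf
    · ring

lemma isUnionOfTriangles_triangleAt (huv : IsEisensteinPair u v) (ha : 0 < a) (hb : 0 < b)
    (h : c ^ 2 = a ^ 2 + b ^ 2 + a * b) {K m : ℕ} (hK : 0 < K) (hm : 3 * K ≤ m)
    (hrep : ∀ T, K ≤ T → ∃ i j, T * (a * b) = a ^ 2 + b ^ 2 + i * a + j * b) (P : Plane) :
    IsUnionOfTriangles (triangleAt P u v (m * (a * b))) (m ^ 2 * (a * b)) a b c := by
  obtain ⟨z, rfl, hz⟩ : ∃ z, m = K + K + z ∧ K ≤ z := ⟨m - (K + K), by lia, by lia⟩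
  have trap {u v : Plane} (huv : IsEisensteinPair u v) {x y : ℕ} (hx : K ≤ x) (hy : K ≤ y)
      (P : Plane) := huv.isUnionOfTriangles_trapezoidAt ha hb h
    (fun T hT => hrep T (hy.trans hT)) (hK.trans_le hx) P
  have hrotate : IsEisensteinPair (v - u) (-u) := by
    simpa only [neg_sub, neg_sub_left, sub_add_cancel] using huv.rotate.rotate
  push_cast
  rw [add_mul, add_mul, triangleAt_eq_union_trapezoidAt (by positivity) (by positivity)
    (by positivity)]
  convert ((trap huv le_rfl hz _).union (trap huv.rotate le_rfl le_rfl _)).union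
    (trap hrotate hz le_rfl _) using 1
  ring

end IsEisensteinPair

section NumberTheory

variable {a b c T : ℕ}

lemma sq_ne_of_coprime (hab : a.Coprime b) (ha : 0 < a) (hb : 0 < b)
    (h : c ^ 2 = a ^ 2 + b ^ 2 + a * b) : c ^ 2 ≠ T * (a * b) + a + b := by
  have one_lt {a b : ℕ} (ha : 0 < a) (hb : 0 < b) (h : c ^ 2 = a ^ 2 + b ^ 2 + a * b) : 1 < a := by
    by_contra! ha1
    obtain rfl : a = 1 := by lia
    have hbc : b < c := by nlinarith
    nlinarith
  have dvd_sub_one {a b : ℕ} (hab : a.Coprime b) (hb : 1 < b)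
      (heq : a ^ 2 + b ^ 2 + a * b = T * (a * b) + a + b) : a ∣ b - 1 := by
    have hdvd : (a : ℤ) ∣ b * (b - 1) := by
      refine ⟨T * b + 1 - a - b, ?_⟩
      zify at heq
      linear_combination heq
    zify [hb.le]
    exact (Nat.isCoprime_iff_coprime.2 hab).dvd_of_dvd_mul_left hdvd
  intro hT
  have ha1 : 1 < a := one_lt ha hb h
  have hb1 : 1 < b := one_lt hb ha (by rw [h]; ring)
  have hle_b : a ≤ b - 1 :=
    Nat.le_of_dvd (by lia) (dvd_sub_one hab hb1 (by rw [← h, hT]))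
  have hle_a : b ≤ a - 1 :=
    Nat.le_of_dvd (by lia) (dvd_sub_one hab.symm ha1 (by linear_combination hT - h))
  lia

lemma exists_mul_eq_sq_add_sq_add (ha : 0 < a) (hb : 0 < b) (h : c ^ 2 = a ^ 2 + b ^ 2 + a * b)
    (hT : c ^ 2 ≤ T * (a * b) + a + b) :
    ∃ i j, T * (a * b) = a ^ 2 + b ^ 2 + i * a + j * b := by
  obtain ⟨g, a, b, hab, rfl, rfl, hg⟩ : ∃ g a' b',
      a'.Coprime b' ∧ a = g * a' ∧ b = g * b' ∧ 0 < g := by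
    obtain ⟨a', b', hab, ha', hb'⟩ := Nat.exists_coprime a b
    exact ⟨_, a', b', hab, by rwa [mul_comm], by rwa [mul_comm], Nat.gcd_pos_of_pos_left b ha⟩
  replace ha : 0 < a := Nat.pos_of_mul_pos_left ha
  replace hb : 0 < b := Nat.pos_of_mul_pos_left hb
  have hle : g * (a ^ 2 + b ^ 2) + g * (a * b) ≤ g * T * (a * b) + a + b := by
    refine Nat.le_of_mul_le_mul_left ?_ hg
    linear_combination hT - h
  -- Equality would miss the Frobenius bound below by one.
  have hlt : g * (a ^ 2 + b ^ 2) + a * b < g * T * (a * b) + a + b := by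
    obtain rfl | hg2 : g = 1 ∨ 2 ≤ g := by lia
    · simp only [one_mul] at h hle ⊢
      exact hle.lt_of_ne (h ▸ sq_ne_of_coprime hab ha hb h)
    · nlinarith [mul_pos ha hb]
  have hpred : a.pred * b.pred + a + b = a * b + 1 := by
    obtain ⟨x, rfl⟩ := Nat.exists_eq_succ_of_ne_zero ha.ne'
    obtain ⟨y, rfl⟩ := Nat.exists_eq_succ_of_ne_zero hb.ne'
    simp only [Nat.succ_eq_add_one, Nat.pred_eq_sub_one, add_tsub_cancel_right]
    ring
  obtain ⟨n, hn⟩ : ∃ n, g * T * (a * b) = g * (a ^ 2 + b ^ 2) + n :=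
    Nat.exists_eq_add_of_le (by lia)
  obtain ⟨i, j, hij⟩ := Nat.exists_add_mul_eq_of_gcd_dvd_of_mul_pred_le a b n
    (by rw [hab.gcd_eq_one]; exact one_dvd n) (by lia)
  exact ⟨i, j, by linear_combination g * hn - g * hij⟩

lemma exists_ceil_eq_natCast (ha : 0 < a) (hb : 0 < b) (h : c ^ 2 = a ^ 2 + b ^ 2 + a * b) :
    ∃ K : ℕ, ⌈((c : ℚ) ^ 2 - a - b) / (a * b)⌉ = K ∧ 0 < K ∧ c ^ 2 ≤ K * (a * b) + a + b := by
  have hQ : (c : ℚ) ^ 2 = a ^ 2 + b ^ 2 + a * b := mod_cast h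
  have haQ : (1 : ℚ) ≤ a := mod_cast ha
  have hbQ : (1 : ℚ) ≤ b := mod_cast hb
  have hpos : 0 < ⌈((c : ℚ) ^ 2 - a - b) / (a * b)⌉ :=
    Int.ceil_pos.2 (div_pos (by nlinarith) (by positivity))
  obtain ⟨K, hK⟩ := Int.eq_ofNat_of_zero_le hpos.le
  refine ⟨K, hK, by lia, ?_⟩
  have hle := Int.le_ceil (((c : ℚ) ^ 2 - a - b) / (a * b))
  rw [hK, div_le_iff₀ (by positivity), Int.cast_natCast] at hle
  exact_mod_cast show (c : ℚ) ^ 2 ≤ K * (a * b) + a + b by linarith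

end NumberTheory

theorem stmt3_general (a b c : ℕ) (ha : 0 < a) (hb : 0 < b)
    (h : c ^ 2 = a ^ 2 + b ^ 2 + a * b)
    (m : ℕ) (hm : 3 * ⌈(((c : ℚ) ^ 2 - a - b) / (a * b))⌉ ≤ (m : ℤ)) :
    TilesInto (EquilateralTri ((m : ℝ) * a * b)) (m ^ 2 * a * b) a b c := by
  have hR : (c : ℝ) ^ 2 = a ^ 2 + b ^ 2 + a * b := mod_cast h
  obtain ⟨K, hceil, hK, hcK⟩ := exists_ceil_eq_natCast ha hb h
  have hKm : 3 * K ≤ m := by lia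
  have hrep (T : ℕ) (hT : K ≤ T) : ∃ i j, T * (a * b) = a ^ 2 + b ^ 2 + i * a + j * b :=
    exists_mul_eq_sq_add_sq_add ha hb h (hcK.trans (by gcongr))
  have hcover : IsUnionOfTriangles (EquilateralTri (m * a * b)) (m ^ 2 * a * b) a b c := by
    have hm0 : 0 < m := by lia
    rw [equilateralTri_eq_triangleAt_smul (by positivity), mul_assoc, mul_assoc]
    exact isEisensteinPair_pt.isUnionOfTriangles_triangleAt ha hb h hK hKm hrep 0
  have htile := isTriangle_triangleAt_pt a.cast_nonneg b.cast_nonneg c.cast_nonneg hR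
  refine hcover.tilesInto htile (le_of_eq ?_)
  rw [htile.volume_eq_ofReal_mul hR, volume_equilateralTri, ← mul_assoc, ← ENNReal.ofReal_natCast,
    ← ENNReal.ofReal_mul (Nat.cast_nonneg _)]
  congr 2
  push_cast
  ring

theorem stmt3 (a b c : ℕ) (ha : 0 < a) (hb : 0 < b) (hc : 0 < c)
    (hab : Nat.Coprime a b) (hac : Nat.Coprime a c) (hbc : Nat.Coprime b c)
    (h : c ^ 2 = a ^ 2 + b ^ 2 + a * b)
    (m : ℕ) (hm : 3 * ⌈(((c : ℚ) ^ 2 - a - b) / (a * b))⌉ ≤ (m : ℤ)) :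
    TilesInto (EquilateralTri ((m : ℝ) * a * b)) (m ^ 2 * a * b) a b c :=
  stmt3_general a b c ha hb h m hm
end
end
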